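/- arXiv:2209.07203 — 3 statements merged into one kernel-verified Lean document; each statement's English description precedes it below -/
import Mathlib

section
/- Let (S,·,1) be a monoid, φ : S → S a switch, and u ∈ S with φ(u) = 1. Then φ is a bijection, with inverse given by the composition x ↦ u · φ(x) · u; that is, u · φ(φ(a)) · u = a for all a ∈ S and φ(u · φ(b) · u) = b for all b ∈ S. -/
/-- The switches of a multiplication on `S`: maps that reverse products around an inner value `φ b`,
which they turn back into `b`. Triple products are bracketed to the left, which matters when the
multiplication is not associative. -/
def IsSwitch {S : Type*} [Mul S] (φ : S → S) : Prop :=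
  ∀ a b c : S, φ (a * φ b * c) = φ c * b * φ a

namespace IsSwitch

variable {S : Type*} [MulOneClass S] {φ : S → S} {u : S}

theorem rightInverse (hφ : IsSwitch φ) (hu : φ u = 1) :
    Function.RightInverse (fun x ↦ u * φ x * u) φ := fun b ↦
  calc φ (u * φ b * u) = φ u * b * φ u := hφ u b u
    _ = b := by rw [hu, one_mul, mul_one]

-- The right inverse `x ↦ u * φ x * u` depends on `x` only through `φ x`.
theorem injective (hφ : IsSwitch φ) (hu : φ u = 1) : Function.Injective φ := fun x y hxy ↦
  calc x = φ (u * φ x * u) := (hφ.rightInverse hu x).symm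
    _ = φ (u * φ y * u) := by rw [hxy]
    _ = y := hφ.rightInverse hu y

theorem leftInverse (hφ : IsSwitch φ) (hu : φ u = 1) :
    Function.LeftInverse (fun x ↦ u * φ x * u) φ :=
  (hφ.rightInverse hu).rightInverse_of_injective (hφ.injective hu)

theorem bijective (hφ : IsSwitch φ) (hu : φ u = 1) : Function.Bijective φ :=
  ⟨hφ.injective hu, (hφ.rightInverse hu).surjective⟩

end IsSwitch

theorem stmt_11_general {S : Type*} [MulOneClass S] {φ : S → S} (hφ : IsSwitch φ)
    {u : S} (hu : φ u = 1) :
    Function.Bijective φ ∧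
    (∀ a : S, u * φ (φ a) * u = a) ∧
    (∀ b : S, φ (u * φ b * u) = b) :=
  ⟨hφ.bijective hu, hφ.leftInverse hu, hφ.rightInverse hu⟩

/-- For a monoid `(S,*,1)`, a switch `φ`, and `u` with `φ u = 1`,
the map `φ` is a bijection with inverse `x ↦ u * φ x * u`. -/
theorem stmt_11 {S : Type*} [Monoid S] (φ : S → S)
    (hφ : ∀ a b c : S, φ (a * φ b * c) = φ c * b * φ a)
    (u : S) (hu : φ u = 1) :
    Function.Bijective φ ∧
    (∀ a : S, u * φ (φ a) * u = a) ∧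
    (∀ b : S, φ (u * φ b * u) = b) :=
  stmt_11_general hφ hu
end

section
/- Let (S,[-,-,-]) be a semiheap with a biunit pair (a,b), and let φ : S → S be a bijective warp. Let c ∈ S be the element with φ(c) = b. Then (a,c) is a biunit pair in the twisted semiheap S_φ = (S, [x,y,z]_φ := [x, φ(y), z]), i.e. [a, φ(c), x] = x = [x, φ(a), c] for all x ∈ S. -/
section TernaryOperation

variable {S : Type*}

/-- Biunit pairs, the two-sided units of a semiheap, defined for an arbitrary ternary operation. -/
def IsBiunitPair (t : S → S → S → S) (a b : S) : Prop :=
  ∀ x, t a b x = x ∧ t x a b = x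

/-- Warps, the maps along which a semiheap can be twisted (see `twistedOp`), defined for an
arbitrary ternary operation. -/
def IsWarp (t : S → S → S → S) (φ : S → S) : Prop :=
  ∀ x y z, φ (t x (φ y) z) = t (φ x) y (φ z)

/-- The twisted operation `[x, y, z]_φ`, making `S` a semiheap when `t` does and `φ` is a warp. -/
def twistedOp (t : S → S → S → S) (φ : S → S) : S → S → S → S :=
  fun x y z => t x (φ y) z

variable {t : S → S → S → S} {φ : S → S}

theorem IsWarp.twistedOp_eq_iff (hwarp : IsWarp t φ) (hinj : Function.Injective φ) {x y z w : S} :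
    twistedOp t φ x y z = w ↔ t (φ x) y (φ z) = φ w := by
  rw [← hwarp x y z, hinj.eq_iff, twistedOp]

theorem stmt_13_general {a b c : S} (hbi : IsBiunitPair t a b) (hwarp : IsWarp t φ)
    (hinj : Function.Injective φ) (hc : φ c = b) : IsBiunitPair (twistedOp t φ) a c := by
  subst hc
  intro x
  have left_unit : twistedOp t φ a c x = x := (hbi x).1
  have right_unit : twistedOp t φ x a c = x :=
    (hwarp.twistedOp_eq_iff hinj).2 (hbi (φ x)).2
  exact ⟨left_unit, right_unit⟩

end TernaryOperation

/-- If `(a,b)` is a biunit pair of a semiheap `(S,t)` and `φ` is a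
bijective warp with `φ c = b`, then `(a,c)` is a biunit pair of the twisted semiheap
`[x,y,z]_φ := t x (φ y) z`. -/
theorem stmt_13 {S : Type*} (t : S → S → S → S)
    (h1 : ∀ a b c d e, t (t a b c) d e = t a (t d c b) e)
    (h2 : ∀ a b c d e, t (t a b c) d e = t a b (t c d e))
    (a b : S) (hbi : ∀ x, t a b x = x ∧ t x a b = x)
    (φ : S → S)
    (hwarp : ∀ x y z, φ (t x (φ y) z) = t (φ x) y (φ z))
    (hbij : Function.Bijective φ)
    (c : S) (hc : φ c = b) :
    ∀ x, t a (φ c) x = x ∧ t x (φ a) c = x :=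
  stmt_13_general hbi hwarp hbij.injective hc
end

section
/- Let (S,[-,-,-]) be a semiheap with a biunit pair (a,c). Then the middle shift μ_{ac} : x ↦ [a,x,c] is an anti-automorphism of the semigroup (S, ∘_a) where x ∘_a y := [x,a,y], i.e. μ_{ac} is bijective and μ_{ac}(x) ∘_a μ_{ac}(y) = μ_{ac}(y ∘_a x) for all x,y ∈ S. Moreover, μ_{aa} : x ↦ [a,x,a] is an anti-isomorphism from (S, ∘_a) to (S, ∘_c), i.e. μ_{aa} is bijective and μ_{aa}(x ∘_a y) = μ_{aa}(y) ∘_c μ_{aa}(x) for all x,y ∈ S, where x ∘_c y := [x,c,y]. -/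
/-!
In any semiheap, `μ_{ab}` is an anti-homomorphism from the retract at `[b,e,a]` to the retract
at `e`, so for a biunit pair `(a,c)` both anti-homomorphism laws reduce to `[c,a,a] = a` and
`[a,c,a] = a`. Since `μ_{ab}(μ_{cd}(x)) = [[a,d,x],c,b]`, the shift `μ_{ab}` is inverted by
`μ_{b'a'}` whenever `a'` and `b'` are biunit partners of `a` and `b`.
-/

/-- The semiheap laws for a ternary operation `t`, where `t a b c` stands for `[a,b,c]`: the first
bracketing `[[a,b,c],d,e]` is equated with each of the other two. -/
structure IsSemiheap {S : Type*} (t : S → S → S → S) : Prop where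
  assoc_middle : ∀ a b c d e, t (t a b c) d e = t a (t d c b) e
  assoc_right : ∀ a b c d e, t (t a b c) d e = t a b (t c d e)

/-- `(a, c)` is a biunit pair: `[a,c,-]` and `[-,a,c]` are both the identity map. -/
structure IsBiunitPair_s14 {S : Type*} (t : S → S → S → S) (a c : S) : Prop where
  left_unit : ∀ x, t a c x = x
  right_unit : ∀ x, t x a c = x

/-- The middle shift `μ_{ab}`, through which retracts of a semiheap are compared. -/
def middleShift {S : Type*} (t : S → S → S → S) (a b x : S) : S := t a x b

/-- The multiplication `∘_a` of the `a`-retract. -/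
def retractMul {S : Type*} (t : S → S → S → S) (a x y : S) : S := t x a y

section

variable {S : Type*} {t : S → S → S → S} {a a' b b' c : S}

theorem IsBiunitPair_s14.symm (h : IsBiunitPair_s14 t a c) (ht : IsSemiheap t) : IsBiunitPair_s14 t c a where
  left_unit x :=
    calc t c a x
      _ = t (t a c c) a x := by rw [h.left_unit c]
      _ = t a (t a c c) x := ht.assoc_middle a c c a x
      _ = t a c x := by rw [h.left_unit c]
      _ = x := h.left_unit x
  right_unit x :=
    calc t x c a
      _ = t (t x c a) a c := (h.right_unit _).symm
      _ = t x (t a a c) c := ht.assoc_middle x c a a c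
      _ = t x a c := by rw [h.right_unit a]
      _ = x := h.right_unit x

namespace IsSemiheap

theorem middleShift_middleShift (ht : IsSemiheap t) (a b c d x : S) :
    middleShift t a b (middleShift t c d x) = t (t a d x) c b :=
  (ht.assoc_middle a d x c b).symm

theorem leftInverse_middleShift (ht : IsSemiheap t) (ha : IsBiunitPair_s14 t a a')
    (hb : IsBiunitPair_s14 t b b') :
    Function.LeftInverse (middleShift t a b) (middleShift t b' a') := fun x => by
  rw [ht.middleShift_middleShift, ha.left_unit, (hb.symm ht).right_unit]

theorem bijective_middleShift (ht : IsSemiheap t) (ha : IsBiunitPair_s14 t a a')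
    (hb : IsBiunitPair_s14 t b b') : Function.Bijective (middleShift t a b) :=
  Function.bijective_iff_has_inverse.mpr ⟨middleShift t b' a',
    ht.leftInverse_middleShift (hb.symm ht) (ha.symm ht), ht.leftInverse_middleShift ha hb⟩

theorem retractMul_middleShift (ht : IsSemiheap t) (a b e x y : S) :
    retractMul t e (middleShift t a b x) (middleShift t a b y) =
      middleShift t a b (retractMul t (t b e a) y x) :=
  calc t (t a x b) e (t a y b)
    _ = t a x (t b e (t a y b)) := ht.assoc_right a x b e (t a y b)
    _ = t a x (t (t b e a) y b) := by rw [ht.assoc_right b e a y b]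
    _ = t (t a x (t b e a)) y b := (ht.assoc_right a x (t b e a) y b).symm
    _ = t a (t y (t b e a) x) b := ht.assoc_middle a x (t b e a) y b

end IsSemiheap

end

/-- For a biunit pair `(a,c)` of a semiheap `(S,t)`, the middle shift
`μ_{ac}` is an anti-automorphism of the retract semigroup `(S, ∘_a)`, and `μ_{aa}` is
an anti-isomorphism from `(S, ∘_a)` to `(S, ∘_c)`. -/
theorem stmt_14 {S : Type*} (t : S → S → S → S)
    (h1 : ∀ a b c d e, t (t a b c) d e = t a (t d c b) e)
    (h2 : ∀ a b c d e, t (t a b c) d e = t a b (t c d e))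
    (a c : S) (hbi : ∀ x, t a c x = x ∧ t x a c = x) :
    (Function.Bijective (fun x => t a x c) ∧
     ∀ x y, t (t a x c) a (t a y c) = t a (t y a x) c) ∧
    (Function.Bijective (fun x => t a x a) ∧
     ∀ x y, t a (t x a y) a = t (t a y a) c (t a x a)) := by
  have ht : IsSemiheap t := ⟨h1, h2⟩
  have hac : IsBiunitPair_s14 t a c := ⟨fun x => (hbi x).1, fun x => (hbi x).2⟩
  have hca : IsBiunitPair_s14 t c a := hac.symm ht
  have anti_automorphism (x y : S) : retractMul t a (middleShift t a c x) (middleShift t a c y) =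
      middleShift t a c (retractMul t a y x) := by
    rw [ht.retractMul_middleShift, hca.left_unit]
  have anti_isomorphism (x y : S) : middleShift t a a (retractMul t a x y) =
      retractMul t c (middleShift t a a y) (middleShift t a a x) := by
    rw [ht.retractMul_middleShift, hac.left_unit]
  exact ⟨⟨ht.bijective_middleShift hac hca, anti_automorphism⟩,
    ht.bijective_middleShift hac hac, anti_isomorphism⟩
end
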